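/- Fix integers d,e ≥ 1 and let ~C^{d,e}_n denote the largest cardinality of an equivalence class of the relation 't ~ t' iff ld(t) ~^d ld(t') and rd(t) ~^e rd(t')' on T_n. If 0 ≤ n < d+e then ~C^{d,e}_n = 1. If n ≥ d+e then ~C^{d,e}_n = C_{n+2−d−e}, and the number of equivalence classes of this maximal cardinality equals binom(d+e−2, d−1). -/

import Mathlib

/-- Full binary trees (every internal node has exactly two children). -/
inductive BTree : Type
  | leaf : BTree
  | node : BTree → BTree → BTree
deriving DecidableEq

namespace BTree

/-- Number of leaves of a full binary tree. -/
def numLeaves : BTree → ℕ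
  | leaf => 1
  | node l r => l.numLeaves + r.numLeaves

/-- The list of pairs (left depth, right depth) of the leaves, in preorder. -/
def leafDepths : BTree → List (ℕ × ℕ)
  | leaf => [(0, 0)]
  | node l r =>
      (l.leafDepths.map fun p => (p.1 + 1, p.2)) ++ (r.leafDepths.map fun p => (p.1, p.2 + 1))

/-- The left depth sequence `ld(t)` of the leaves of `t`, in preorder. -/
def ld (t : BTree) : List ℕ := t.leafDepths.map Prod.fst

/-- The right depth sequence `rd(t)` of the leaves of `t`, in preorder. -/
def rd (t : BTree) : List ℕ := t.leafDepths.map Prod.snd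

end BTree

/-- `b ~^d c` : the sequences have equal length and agree at every position where
either entry is `< d`. -/
def DepthEq (d : ℕ) : List ℕ → List ℕ → Prop :=
  List.Forall₂ (fun a b => min a b < d → a = b)

/-- `b ~_k c` : entrywise congruence mod `k` (and equal length). -/
def ModListEq (k : ℕ) : List ℕ → List ℕ → Prop :=
  List.Forall₂ (fun a b => a % k = b % k)

/-- The relation `t ~ t'` iff `ld(t) ~^d ld(t')` and `rd(t) ~^e rd(t')`. -/
def DeRel (d e : ℕ) (t t' : BTree) : Prop :=
  DepthEq d t.ld t'.ld ∧ DepthEq e t.rd t'.rd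

/-- The relation `t ~ t'` iff `ld(t) ~_k^d ld(t')` (i.e. `ld(t) ~_k ld(t')` and
`ld(t) ~^d ld(t')`). -/
def DkRel (d k : ℕ) (t t' : BTree) : Prop :=
  ModListEq k t.ld t'.ld ∧ DepthEq d t.ld t'.ld

/-- `T_n`: full binary trees with `n+1` leaves. -/
def Tn (n : ℕ) : Type := {t : BTree // t.numLeaves = n + 1}

/-- `C^{d,e}_n`: the number of equivalence classes of the relation `DeRel d e` on `T_n`. -/
noncomputable def Cde (d e n : ℕ) : ℕ :=
  Nat.card (Quot (fun t t' : Tn n => DeRel d e t.1 t'.1))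

/-- `C^d_{k,n}`: the number of equivalence classes of `ld(t) ~_k^d ld(t')` on `T_n`. -/
noncomputable def Cdk (d k n : ℕ) : ℕ :=
  Nat.card (Quot (fun t t' : Tn n => DkRel d k t.1 t'.1))

/-- The size of an equivalence class (given as an element of the quotient of `T_n` by the
relation `DeRel d e`). -/
noncomputable def classSize (d e n : ℕ)
    (q : Quot (fun t t' : Tn n => DeRel d e t.1 t'.1)) : ℕ :=
  Nat.card {t : Tn n // Quot.mk (fun t t' : Tn n => DeRel d e t.1 t'.1) t = q}

/-- `~C^{d,e}_n`: the largest cardinality of an equivalence class of `DeRel d e` on `T_n`. -/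
noncomputable def tCde (d e n : ℕ) : ℕ := sSup (Set.range (classSize d e n))

/-!
Call `t'` equivalent to `t` when the two depth relations hold. If `d, e ≤ 1`, two trees are
equivalent as soon as they have the same size, so a class has Catalan cardinality. Otherwise the
depth sequences up to the thresholds reveal how many leaves lie in the left subtree, and the class
of `node l r` for `(d, e)` is the product of the class of `l` for `(d - 1, e)` and the class of `r`
for `(d, e - 1)`. Since `C_i * C_j ≤ C_{i+j}`, a class of trees of size `n` has at most
`C_{n - (d-1) - (e-1)}` elements. This inequality is strict for `i, j ≥ 1`, so once the bound is
at least `C_2` it is attained only if one of the two subtrees is a leaf at every step down to the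
threshold `(1, 1)`. The largest classes thus correspond to the words with `d - 1` left steps
and `e - 1` right steps.
-/

/-! ### Catalan numbers -/

theorem catalan_succ_eq_sum_range (n : ℕ) :
    catalan (n + 1) = ∑ p ∈ Finset.range (n + 1), catalan p * catalan (n - p) := by
  rw [catalan_succ, Finset.sum_range]

theorem catalan_pos (n : ℕ) : 0 < catalan n :=
  Nat.pos_of_mul_pos_left (succ_mul_catalan_eq_centralBinom n ▸ Nat.centralBinom_pos n)

theorem catalan_succ_mul_le_sum {i j : ℕ}
    (h : ∀ m ≤ i, catalan m * catalan j ≤ catalan (m + j)) :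
    catalan (i + 1) * catalan j ≤
      ∑ p ∈ Finset.range (i + 1), catalan p * catalan (i + j - p) := by
  rw [catalan_succ_eq_sum_range, Finset.sum_mul]
  refine Finset.sum_le_sum fun p hp => ?_
  have hp := Finset.mem_range.1 hp
  rw [mul_assoc, show i + j - p = i - p + j by omega]
  exact Nat.mul_le_mul_left _ (h _ (by omega))

theorem catalan_mul_le (i j : ℕ) : catalan i * catalan j ≤ catalan (i + j) := by
  induction i using Nat.strong_induction_on with
  | _ i ih =>
    cases i with
    | zero => simp
    | succ i =>
      rw [show i + 1 + j = i + j + 1 by omega, catalan_succ_eq_sum_range (i + j)]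
      exact (catalan_succ_mul_le_sum fun m hm => ih m (by omega)).trans
        (Finset.sum_le_sum_of_subset (Finset.range_mono (by omega)))

theorem catalan_mul_lt {i j : ℕ} (hi : 0 < i) (hj : 0 < j) :
    catalan i * catalan j < catalan (i + j) := by
  obtain ⟨i, rfl⟩ := Nat.exists_eq_add_of_lt hi
  rw [Nat.zero_add, show i + 1 + j = i + j + 1 by omega, catalan_succ_eq_sum_range (i + j)]
  refine (catalan_succ_mul_le_sum fun m _ => catalan_mul_le m j).trans_lt ?_
  exact Finset.sum_lt_sum_of_subset (i := i + 1) (Finset.range_mono (by omega))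
    (by simpa [Nat.one_le_iff_ne_zero] using hj.ne') (by simp)
    (Nat.mul_pos (catalan_pos _) (catalan_pos _)) (fun _ _ _ => Nat.zero_le _)

theorem catalan_mono : Monotone catalan :=
  monotone_nat_of_le_succ fun n => by simpa using catalan_mul_le n 1

theorem catalan_lt_catalan {i k : ℕ} (hik : i < k) (hk : 2 ≤ k) : catalan i < catalan k := by
  obtain ⟨m, rfl⟩ := Nat.exists_eq_add_of_le' hk
  calc catalan i ≤ catalan (m + 1) := catalan_mono (by omega)
    _ < catalan (m + 2) := by simpa [Nat.add_assoc] using catalan_mul_lt m.succ_pos one_pos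

theorem add_eq_and_eq_zero_or_eq_zero_of_catalan_mul_eq {i j k : ℕ} (hk : 2 ≤ k) (hij : i + j ≤ k)
    (h : catalan i * catalan j = catalan k) : i + j = k ∧ (i = 0 ∨ j = 0) := by
  have hsum : i + j = k := by
    by_contra hne
    have hlt := catalan_lt_catalan (lt_of_le_of_ne hij hne) hk
    exact (h ▸ catalan_mul_le i j).not_gt hlt
  refine ⟨hsum, ?_⟩
  by_contra! hne
  have hlt := catalan_mul_lt (Nat.pos_of_ne_zero hne.1) (Nat.pos_of_ne_zero hne.2)
  rw [h, hsum] at hlt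
  exact hlt.false

/-! ### Words with prescribed letter counts -/

/-- Words in left steps (`true`) and right steps (`false`), `a` of the former and `b` of the
latter. They index the largest equivalence classes. -/
def stepWords (a b : ℕ) : Set (List Bool) := {w | w.count true = a ∧ w.count false = b}

theorem length_of_mem_stepWords {a b : ℕ} {w : List Bool} (hw : w ∈ stepWords a b) :
    w.length = a + b := by
  rw [← w.count_true_add_count_false, hw.1, hw.2]

theorem finite_stepWords (a b : ℕ) : (stepWords a b).Finite :=
  (List.finite_length_eq Bool (a + b)).subset fun _ => length_of_mem_stepWords

theorem stepWords_zero_left (b : ℕ) : stepWords 0 b = {List.replicate b false} := by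
  ext w
  refine ⟨fun hw => List.eq_replicate_iff.2 ⟨?_, fun c hc => ?_⟩, ?_⟩
  · rw [length_of_mem_stepWords hw, Nat.zero_add]
  · exact Bool.of_not_eq_true fun h => List.count_eq_zero.1 hw.1 (h ▸ hc)
  · rintro rfl
    simp [stepWords, List.count_replicate]

theorem stepWords_zero_right (a : ℕ) : stepWords a 0 = {List.replicate a true} := by
  ext w
  refine ⟨fun hw => List.eq_replicate_iff.2 ⟨length_of_mem_stepWords hw, fun c hc => ?_⟩, ?_⟩
  · exact Bool.of_not_eq_false fun h => List.count_eq_zero.1 hw.2 (h ▸ hc)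
  · rintro rfl
    simp [stepWords, List.count_replicate]

theorem stepWords_succ_succ (a b : ℕ) :
    stepWords (a + 1) (b + 1) =
      List.cons true '' stepWords a (b + 1) ∪ List.cons false '' stepWords (a + 1) b := by
  ext w
  rcases w with _ | ⟨_ | _, w⟩ <;> simp [stepWords]

theorem ncard_stepWords (a b : ℕ) : (stepWords a b).ncard = (a + b).choose a := by
  match a, b with
  | 0, b => simp [stepWords_zero_left]
  | a, 0 => simp [stepWords_zero_right]
  | a + 1, b + 1 =>
    have hdisj : Disjoint (List.cons true '' stepWords a (b + 1))
        (List.cons false '' stepWords (a + 1) b) := by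
      rw [Set.disjoint_left]
      rintro _ ⟨v, _, rfl⟩ ⟨w, _, h⟩
      simp at h
    rw [stepWords_succ_succ, Set.ncard_union_eq hdisj ((finite_stepWords _ _).image _)
        ((finite_stepWords _ _).image _),
      Set.ncard_image_of_injective _ List.cons_injective,
      Set.ncard_image_of_injective _ List.cons_injective, ncard_stepWords a (b + 1),
      ncard_stepWords (a + 1) b, show a + 1 + (b + 1) = a + b + 1 + 1 by omega,
      Nat.choose_succ_succ, ← Nat.add_assoc, show a + 1 + b = a + b + 1 by omega]

theorem stepWords_nonempty (a b : ℕ) : (stepWords a b).Nonempty :=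
  Set.nonempty_of_ncard_ne_zero (ncard_stepWords a b ▸ (Nat.choose_pos (by omega)).ne')

/-! ### Size and depth sequences -/

namespace BTree

/-- The number of internal nodes: `T_n` consists of the trees of size `n`. -/
def size : BTree → ℕ
  | leaf => 0
  | node l r => l.size + r.size + 1

/-- The reflected tree. It exchanges left and right depths and is used to transfer facts on
`ld` to `rd`. -/
def mirror : BTree → BTree
  | leaf => leaf
  | node l r => node r.mirror l.mirror

theorem numLeaves_eq_size_add_one (t : BTree) : t.numLeaves = t.size + 1 := by
  induction t with
  | leaf => rfl
  | node l r hl hr => simp only [numLeaves, size]; omega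

theorem size_eq_zero {t : BTree} : t.size = 0 ↔ t = leaf := by
  cases t <;> simp [size]

theorem size_mirror (t : BTree) : t.mirror.size = t.size := by
  induction t with
  | leaf => rfl
  | node l r hl hr => simp only [mirror, size]; omega

theorem ld_node (l r : BTree) : (node l r).ld = l.ld.map (· + 1) ++ r.ld := by
  simp [ld, leafDepths, Function.comp_def]

theorem rd_node (l r : BTree) : (node l r).rd = l.rd ++ r.rd.map (· + 1) := by
  simp [rd, leafDepths, Function.comp_def]

theorem ld_mirror (t : BTree) : t.mirror.ld = t.rd.reverse := by
  induction t with
  | leaf => rfl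
  | node l r hl hr =>
    simp only [mirror, ld_node, rd_node, hl, hr, List.reverse_append, List.map_reverse]

theorem length_ld (t : BTree) : t.ld.length = t.size + 1 := by
  induction t with
  | leaf => rfl
  | node l r hl hr => simp only [ld_node, size, List.length_append, List.length_map]; omega

theorem length_rd (t : BTree) : t.rd.length = t.size + 1 := by
  rw [← List.length_reverse, ← ld_mirror, length_ld, size_mirror]

theorem exists_ld_eq_map_succ_append_zero (t : BTree) :
    ∃ L : List ℕ, L.length = t.size ∧ t.ld = L.map (· + 1) ++ [0] := by
  induction t with
  | leaf => exact ⟨[], rfl, rfl⟩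
  | node l r _ hr =>
    obtain ⟨R, hlen, hR⟩ := hr
    refine ⟨l.ld ++ R, ?_, by rw [ld_node, hR, List.map_append, List.append_assoc]⟩
    rw [List.length_append, length_ld, hlen, size]
    omega

end BTree

/-! ### Truncated equality of sequences -/

namespace DepthEq

variable {d d' : ℕ} {x x' y y' : List ℕ}

theorem length_eq (h : DepthEq d x y) : x.length = y.length :=
  List.Forall₂.length_eq h

theorem mono (hd : d ≤ d') (h : DepthEq d' x y) : DepthEq d x y :=
  List.Forall₂.imp (fun _ _ hab hlt => hab (hlt.trans_le hd)) h

theorem equivalence (d : ℕ) : Equivalence (DepthEq d) where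
  refl _ := List.forall₂_same.2 fun _ _ _ => rfl
  symm h := List.Forall₂.flip (h.imp fun a b hab hlt => (hab (min_comm a b ▸ hlt)).symm)
  trans {x y z} hxy hyz := by
    induction hxy generalizing z with
    | nil => exact hyz
    | cons hab _ ih =>
      obtain _ | ⟨hbc, hyz⟩ := hyz
      exact .cons (by grind) (ih hyz)

theorem zero_iff : DepthEq 0 x y ↔ x.length = y.length :=
  ⟨length_eq, fun h => List.forall₂_iff_get.2 ⟨h, by simp⟩⟩

theorem map_succ_iff : DepthEq d (x.map (· + 1)) (y.map (· + 1)) ↔ DepthEq (d - 1) x y := by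
  have hrel (a c : ℕ) :
      (min (a + 1) (c + 1) < d → a + 1 = c + 1) ↔ (min a c < d - 1 → a = c) := by
    grind
  simp only [DepthEq, List.forall₂_map_left_iff, List.forall₂_map_right_iff, hrel]

theorem append_iff (h : x.length = x'.length) :
    DepthEq d (x ++ y) (x' ++ y') ↔ DepthEq d x x' ∧ DepthEq d y y' := by
  induction x generalizing x' with
  | nil => simp [DepthEq, List.eq_nil_of_length_eq_zero h.symm]
  | cons c cs ih =>
    obtain _ | ⟨c', cs'⟩ := x'
    · simp at h
    · have ih := ih (Nat.succ_injective h)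
      simp only [DepthEq, List.cons_append, List.forall₂_cons, and_assoc] at ih ⊢
      rw [ih]

theorem reverse_iff : DepthEq d x.reverse y.reverse ↔ DepthEq d x y :=
  List.forall₂_reverse_iff

theorem length_eq_of_append_cons {c c' : ℕ} (h : DepthEq d (x ++ c :: y) (x' ++ c' :: y'))
    (hx : ∀ a ∈ x, d ≤ a) (hx' : ∀ a ∈ x', d ≤ a) (hc : c < d) (hc' : c' < d) :
    x.length = x'.length := by
  induction x generalizing x' with
  | nil =>
    obtain _ | ⟨a', x'⟩ := x'
    · rfl
    · have heq : c = a' := (List.forall₂_cons.1 h).1 (by omega)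
      have hle : d ≤ a' := hx' a' List.mem_cons_self
      omega
  | cons a x ih =>
    obtain _ | ⟨a', x'⟩ := x'
    · have heq : a = c' := (List.forall₂_cons.1 h).1 (by omega)
      have hle : d ≤ a := hx a List.mem_cons_self
      omega
    · exact congrArg Nat.succ (ih (List.forall₂_cons.1 h).2
        (fun b hb => hx b (List.mem_cons_of_mem a hb))
        (fun b hb => hx' b (List.mem_cons_of_mem a' hb)))

end DepthEq

namespace BTree

variable {d : ℕ} {t t' l l' r r' : BTree}

theorem depthEq_ld_mirror_iff : DepthEq d t.mirror.ld t'.mirror.ld ↔ DepthEq d t.rd t'.rd := by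
  rw [ld_mirror, ld_mirror, DepthEq.reverse_iff]

theorem size_eq_of_depthEq_ld (h : DepthEq d t.ld t'.ld) : t.size = t'.size := by
  simpa only [length_ld, Nat.add_right_cancel_iff] using h.length_eq

theorem depthEq_ld_iff_size_eq (hd : d ≤ 1) : DepthEq d t.ld t'.ld ↔ t.size = t'.size := by
  refine ⟨size_eq_of_depthEq_ld, fun h => DepthEq.mono hd ?_⟩
  obtain ⟨L, hlen, hL⟩ := t.exists_ld_eq_map_succ_append_zero
  obtain ⟨L', hlen', hL'⟩ := t'.exists_ld_eq_map_succ_append_zero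
  have hLL' : L.length = L'.length := by rw [hlen, hlen', h]
  rw [hL, hL', DepthEq.append_iff (by simpa using hLL'), DepthEq.map_succ_iff, DepthEq.zero_iff]
  exact ⟨hLL', (DepthEq.equivalence 1).refl _⟩

theorem depthEq_rd_iff_size_eq (hd : d ≤ 1) : DepthEq d t.rd t'.rd ↔ t.size = t'.size := by
  rw [← depthEq_ld_mirror_iff, depthEq_ld_iff_size_eq hd, size_mirror, size_mirror]

/- The last leaf of `l` is the first leaf of `node l r` of left depth less than `2`. -/
theorem size_left_eq_of_depthEq_ld_node (hd : 2 ≤ d)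
    (h : DepthEq d (node l r).ld (node l' r').ld) : l.size = l'.size := by
  obtain ⟨L, hlen, hL⟩ := l.exists_ld_eq_map_succ_append_zero
  obtain ⟨L', hlen', hL'⟩ := l'.exists_ld_eq_map_succ_append_zero
  have h2 : DepthEq 2 (L.map (· + 2) ++ 1 :: r.ld) (L'.map (· + 2) ++ 1 :: r'.ld) := by
    simpa [ld_node, hL, hL'] using h.mono hd
  simpa [hlen, hlen'] using h2.length_eq_of_append_cons (by simp) (by simp) (by simp) (by simp)

theorem size_right_eq_of_depthEq_rd_node (hd : 2 ≤ d)
    (h : DepthEq d (node l r).rd (node l' r').rd) : r.size = r'.size := by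
  rw [← size_mirror r, ← size_mirror r']
  exact size_left_eq_of_depthEq_ld_node hd (depthEq_ld_mirror_iff.2 h)

end BTree

open BTree

/-! ### Recursive description of the relation -/

namespace DeRel

variable {d e : ℕ} {t t' l l' r r' : BTree}

theorem equivalence (d e : ℕ) : Equivalence (DeRel d e) where
  refl _ := ⟨(DepthEq.equivalence d).refl _, (DepthEq.equivalence e).refl _⟩
  symm h := ⟨(DepthEq.equivalence d).symm h.1, (DepthEq.equivalence e).symm h.2⟩
  trans h h' := ⟨(DepthEq.equivalence d).trans h.1 h'.1, (DepthEq.equivalence e).trans h.2 h'.2⟩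

theorem size_eq (h : DeRel d e t t') : t.size = t'.size :=
  size_eq_of_depthEq_ld h.1

theorem leaf_right_iff : DeRel d e t leaf ↔ t = leaf :=
  ⟨fun h => size_eq_zero.1 h.size_eq, fun h => h ▸ (equivalence d e).refl _⟩

theorem iff_size_eq (hd : d ≤ 1) (he : e ≤ 1) : DeRel d e t t' ↔ t.size = t'.size := by
  rw [DeRel, depthEq_ld_iff_size_eq hd, depthEq_rd_iff_size_eq he, and_self]

theorem size_left_eq (hde : 2 ≤ d ∨ 2 ≤ e) (h : DeRel d e (node l r) (node l' r')) :
    l.size = l'.size := by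
  rcases hde with hd | he
  · exact size_left_eq_of_depthEq_ld_node hd h.1
  · have hr := size_right_eq_of_depthEq_rd_node he h.2
    have hlr := h.size_eq
    simp only [size] at hlr
    omega

theorem node_iff (hde : 2 ≤ d ∨ 2 ≤ e) :
    DeRel d e (node l r) (node l' r') ↔ DeRel (d - 1) e l l' ∧ DeRel d (e - 1) r r' := by
  have hiff (hl : l.size = l'.size) : DeRel d e (node l r) (node l' r') ↔
      DeRel (d - 1) e l l' ∧ DeRel d (e - 1) r r' := by
    simp only [DeRel, ld_node, rd_node]
    rw [DepthEq.append_iff (by simp [length_ld, hl]), DepthEq.append_iff (by simp [length_rd, hl]),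
      DepthEq.map_succ_iff, DepthEq.map_succ_iff, and_and_and_comm]
  exact ⟨fun h => (hiff (h.size_left_eq hde)).1 h, fun h => (hiff h.1.size_eq).2 h⟩

end DeRel

/-! ### Cardinalities of the classes -/

namespace BTree

/-- Translation to Mathlib's binary trees with unlabelled nodes, whose nodes are the internal
nodes. -/
def toBinaryTree : BTree → BinaryTree Unit
  | leaf => .nil
  | node l r => .node () l.toBinaryTree r.toBinaryTree

/-- The inverse of `toBinaryTree`. -/
def ofBinaryTree : BinaryTree Unit → BTree
  | .nil => leaf
  | .node _ l r => node (ofBinaryTree l) (ofBinaryTree r)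

/-- Full binary trees correspond to binary trees by deleting the leaves. -/
def equivBinaryTree : BTree ≃ BinaryTree Unit where
  toFun := toBinaryTree
  invFun := ofBinaryTree
  left_inv t := by induction t <;> simp_all [toBinaryTree, ofBinaryTree]
  right_inv t := by induction t <;> simp_all [toBinaryTree, ofBinaryTree]

theorem numNodes_equivBinaryTree (t : BTree) : (equivBinaryTree t).numNodes = t.size := by
  induction t with
  | leaf => rfl
  | node l r hl hr => exact congrArg₂ (fun m n => m + n + 1) hl hr

theorem ncard_size_eq (k : ℕ) : {t : BTree | t.size = k}.ncard = catalan k := by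
  have himage : {t : BTree | t.size = k} =
      equivBinaryTree.symm '' (BinaryTree.treesOfNumNodesEq k : Set (BinaryTree Unit)) := by
    ext t
    simp [Equiv.image_symm_eq_preimage, numNodes_equivBinaryTree]
  rw [himage, Set.ncard_image_of_injective _ equivBinaryTree.symm.injective,
    Set.ncard_coe_finset, BinaryTree.treesOfNumNodesEq_card_eq_catalan]

/-- The equivalence class of `t` for the relation `DeRel d e`, in the set of all trees. -/
def eqClass (d e : ℕ) (t : BTree) : Set BTree := {t' | DeRel d e t' t}

variable {d e : ℕ}

theorem ncard_eqClass_leaf (d e : ℕ) : (eqClass d e leaf).ncard = 1 := by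
  simp [eqClass, DeRel.leaf_right_iff]

theorem ncard_eqClass_of_le_one (hd : d ≤ 1) (he : e ≤ 1) (t : BTree) :
    (eqClass d e t).ncard = catalan t.size := by
  simp only [eqClass, DeRel.iff_size_eq hd he, ncard_size_eq]

theorem eqClass_node (hde : 2 ≤ d ∨ 2 ≤ e) (l r : BTree) :
    eqClass d e (node l r) =
      (fun p => node p.1 p.2) '' (eqClass (d - 1) e l ×ˢ eqClass d (e - 1) r) := by
  ext t
  cases t with
  | leaf =>
    have hleaf : ¬ DeRel d e leaf (node l r) := fun h => by simpa [size] using h.size_eq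
    simp [eqClass, hleaf]
  | node l' r' => simp [eqClass, DeRel.node_iff hde]

theorem ncard_eqClass_node (hde : 2 ≤ d ∨ 2 ≤ e) (l r : BTree) :
    (eqClass d e (node l r)).ncard =
      (eqClass (d - 1) e l).ncard * (eqClass d (e - 1) r).ncard := by
  have hinj : Function.Injective fun p : BTree × BTree => node p.1 p.2 := by
    rintro ⟨l, r⟩ ⟨l', r'⟩ h
    simpa using h
  rw [eqClass_node hde, Set.ncard_image_of_injective _ hinj, Set.ncard_prod]

theorem ncard_eqClass_pos (d e : ℕ) (t : BTree) : 0 < (eqClass d e t).ncard := by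
  have hfin : {t' : BTree | t'.size = t.size}.Finite :=
    Set.finite_of_ncard_pos (ncard_size_eq t.size ▸ catalan_pos _)
  exact (Set.ncard_pos (hfin.subset fun _ h => h.size_eq)).2 ⟨t, (DeRel.equivalence d e).refl t⟩

theorem ncard_eqClass_le (d e : ℕ) (t : BTree) :
    (eqClass d e t).ncard ≤ catalan (t.size - (d - 1 + (e - 1))) := by
  induction t generalizing d e with
  | leaf => simp [ncard_eqClass_leaf, size]
  | node l r hl hr =>
    by_cases hde : d ≤ 1 ∧ e ≤ 1
    · rw [ncard_eqClass_of_le_one hde.1 hde.2]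
      exact catalan_mono (by omega)
    · rw [ncard_eqClass_node (by omega)]
      exact ((Nat.mul_le_mul (hl _ _) (hr _ _)).trans (catalan_mul_le _ _)).trans
        (catalan_mono (by simp only [size]; omega))

theorem eq_leaf_of_ncard_eqClass_node_eq {k : ℕ} {l r : BTree} (hd : 1 ≤ d) (he : 1 ≤ e)
    (hde : 2 ≤ d ∨ 2 ≤ e) (hk : 2 ≤ k) (hsize : (node l r).size + 2 = d + e + k)
    (hmax : (eqClass d e (node l r)).ncard = catalan k) :
    (2 ≤ d ∧ r = leaf ∧ (eqClass (d - 1) e l).ncard = catalan k) ∨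
      (2 ≤ e ∧ l = leaf ∧ (eqClass d (e - 1) r).ncard = catalan k) := by
  rw [ncard_eqClass_node hde] at hmax
  simp only [size] at hsize
  set i := l.size - (d - 1 - 1 + (e - 1))
  set j := r.size - (d - 1 + (e - 1 - 1))
  have hij : i + j ≤ k := by omega
  have hprod : catalan i * catalan j = catalan k := le_antisymm
    ((catalan_mul_le i j).trans (catalan_mono hij))
    (hmax ▸ Nat.mul_le_mul (ncard_eqClass_le _ _ l) (ncard_eqClass_le _ _ r))
  obtain ⟨hsum, hzero⟩ := add_eq_and_eq_zero_or_eq_zero_of_catalan_mul_eq hk hij hprod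
  have hleaf : (2 ≤ d ∧ r.size = 0) ∨ (2 ≤ e ∧ l.size = 0) := by omega
  simp only [size_eq_zero] at hleaf
  rcases hleaf with ⟨hd, rfl⟩ | ⟨he, rfl⟩
  · exact .inl ⟨hd, rfl, by simpa only [ncard_eqClass_leaf, mul_one] using hmax⟩
  · exact .inr ⟨he, rfl, by simpa only [ncard_eqClass_leaf, one_mul] using hmax⟩

/-! ### Caterpillars -/

/-- The tree obtained from `s` by placing it at the end of the path `w` of left (`true`) and right
(`false`) steps from the root, the sibling of each vertex on the path being a leaf. -/
def caterpillar (s : BTree) : List Bool → BTree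
  | [] => s
  | true :: w => node (caterpillar s w) leaf
  | false :: w => node leaf (caterpillar s w)

theorem size_caterpillar (s : BTree) (w : List Bool) :
    (caterpillar s w).size = w.length + s.size := by
  induction w with
  | nil => simp [caterpillar]
  | cons c w ih => cases c <;> simp only [caterpillar, size, ih, List.length_cons] <;> omega

theorem exists_size_eq (k : ℕ) : ∃ t : BTree, t.size = k :=
  ⟨caterpillar leaf (List.replicate k true), by simp [size_caterpillar, size]⟩

theorem ncard_eqClass_caterpillar (s : BTree) {a b : ℕ} {w : List Bool} (hw : w ∈ stepWords a b) :
    (eqClass (a + 1) (b + 1) (caterpillar s w)).ncard = catalan s.size := by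
  obtain ⟨rfl, rfl⟩ := hw
  induction w with
  | nil => exact ncard_eqClass_of_le_one le_rfl le_rfl s
  | cons c w ih =>
    cases c <;> simpa [caterpillar, ncard_eqClass_node, ncard_eqClass_leaf] using ih

theorem exists_eq_caterpillar_of_ncard_eqClass_eq {a b k : ℕ} {t : BTree} (hk : 2 ≤ k)
    (hsize : t.size = a + b + k) (hmax : (eqClass (a + 1) (b + 1) t).ncard = catalan k) :
    ∃ w ∈ stepWords a b, ∃ s : BTree, s.size = k ∧ t = caterpillar s w := by
  induction t generalizing a b with
  | leaf => simp only [size] at hsize; omega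
  | node l r hl hr =>
    by_cases hab : a = 0 ∧ b = 0
    · obtain ⟨rfl, rfl⟩ := hab
      exact ⟨[], ⟨rfl, rfl⟩, node l r, by omega, rfl⟩
    simp only [size] at hsize
    rcases eq_leaf_of_ncard_eqClass_node_eq (by omega) (by omega) (by omega) hk
      (by simp only [size]; omega) hmax with ⟨ha, rfl, hl_max⟩ | ⟨hb, rfl, hr_max⟩
    · obtain ⟨a, rfl⟩ := Nat.exists_eq_add_of_le' (Nat.le_of_succ_le_succ ha)
      obtain ⟨w, hw, s, hs, rfl⟩ := hl (by simp only [size] at hsize; omega) hl_max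
      exact ⟨true :: w, by simpa [stepWords] using hw, s, hs, rfl⟩
    · obtain ⟨b, rfl⟩ := Nat.exists_eq_add_of_le' (Nat.le_of_succ_le_succ hb)
      obtain ⟨w, hw, s, hs, rfl⟩ := hr (by simp only [size] at hsize; omega) hr_max
      exact ⟨false :: w, by simpa [stepWords] using hw, s, hs, rfl⟩

end BTree

namespace DeRel

variable {a b : ℕ} {s s' : BTree} {w w' : List Bool}

theorem caterpillar (hw : w ∈ stepWords a b) (h : s.size = s'.size) :
    DeRel (a + 1) (b + 1) (s.caterpillar w) (s'.caterpillar w) := by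
  obtain ⟨rfl, rfl⟩ := hw
  induction w with
  | nil => exact (DeRel.iff_size_eq le_rfl le_rfl).2 h
  | cons c w ih =>
    cases c <;>
      simpa [BTree.caterpillar, DeRel.node_iff, (DeRel.equivalence _ _).refl] using ih

theorem eq_of_caterpillar (hs : s.size ≠ 0) (hw : w ∈ stepWords a b) (hw' : w' ∈ stepWords a b)
    (h : DeRel (a + 1) (b + 1) (s.caterpillar w) (s.caterpillar w')) : w = w' := by
  have hne (v : List Bool) : (s.caterpillar v).size ≠ leaf.size := by
    simp [size_caterpillar, size, hs]
  obtain ⟨rfl, rfl⟩ := hw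
  induction w generalizing w' with
  | nil => exact (List.eq_nil_of_length_eq_zero (length_of_mem_stepWords hw')).symm
  | cons c w ih =>
    obtain _ | ⟨c', w'⟩ := w'
    · cases c <;> simp [stepWords] at hw'
    · have hde : 2 ≤ (c :: w).count true + 1 ∨ 2 ≤ (c :: w).count false + 1 := by
        cases c <;> simp
      cases c <;> cases c' <;> have h := (node_iff hde).1 h
      · exact congrArg _ (ih (by simpa [stepWords] using hw') (by simpa using h.2))
      · exact (hne _ h.1.size_eq.symm).elim
      · exact (hne _ h.1.size_eq).elim
      · exact congrArg _ (ih (by simpa [stepWords] using hw') (by simpa using h.1))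

end DeRel

/-! ### The quotient of `T_n` -/

theorem Tn.size_eq {n : ℕ} (t : Tn n) : t.1.size = n :=
  Nat.succ_injective (t.1.numLeaves_eq_size_add_one.symm.trans t.2)

/-- A tree of size `n` as an element of `T_n`. -/
def Tn.ofSize {n : ℕ} (t : BTree) (h : t.size = n) : Tn n :=
  ⟨t, by rw [numLeaves_eq_size_add_one, h]⟩

theorem quot_mk_eq_iff {d e n : ℕ} {t t' : Tn n} :
    Quot.mk (fun t t' : Tn n => DeRel d e t.1 t'.1) t = Quot.mk _ t' ↔ DeRel d e t.1 t'.1 :=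
  ((DeRel.equivalence d e).comap Subtype.val).quot_mk_eq_iff t t'

theorem classSize_mk {d e n : ℕ} (t : Tn n) :
    classSize d e n (Quot.mk _ t) = (eqClass d e t.1).ncard := by
  exact Nat.card_congr
    ⟨fun t' => ⟨t'.1.1, quot_mk_eq_iff.1 t'.2⟩,
      fun t' => ⟨Tn.ofSize t'.1 (DeRel.size_eq t'.2 |>.trans t.size_eq), quot_mk_eq_iff.2 t'.2⟩,
      fun _ => rfl, fun _ => rfl⟩

theorem tCde_eq_of_forall_le {d e n m : ℕ}
    (hle : ∀ t : BTree, t.size = n → (eqClass d e t).ncard ≤ m) {t : BTree} (ht : t.size = n)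
    (hm : (eqClass d e t).ncard = m) : tCde d e n = m := by
  refine IsGreatest.csSup_eq ⟨⟨Quot.mk _ (Tn.ofSize t ht), (classSize_mk _).trans hm⟩, ?_⟩
  rintro _ ⟨⟨t⟩, rfl⟩
  exact (classSize_mk t).trans_le (hle t.1 t.size_eq)

theorem tCde_eq_one {d e n : ℕ} (h : n < d + e) : tCde d e n = 1 := by
  have hle (t : BTree) (ht : t.size = n) : (eqClass d e t).ncard ≤ 1 :=
    (ncard_eqClass_le d e t).trans ((catalan_mono (by omega)).trans_eq catalan_one)
  obtain ⟨t, ht⟩ := exists_size_eq n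
  exact tCde_eq_of_forall_le hle ht ((hle t ht).antisymm (ncard_eqClass_pos d e t))

theorem tCde_succ_succ (a b k : ℕ) : tCde (a + 1) (b + 1) (a + b + k) = catalan k := by
  obtain ⟨s, rfl⟩ := exists_size_eq k
  obtain ⟨w, hw⟩ := stepWords_nonempty a b
  refine tCde_eq_of_forall_le (fun t ht => ?_) ?_ (ncard_eqClass_caterpillar s hw)
  · simpa [ht] using ncard_eqClass_le (a + 1) (b + 1) t
  · rw [size_caterpillar, length_of_mem_stepWords hw]

theorem card_classSize_eq_tCde {k : ℕ} (a b : ℕ) (hk : 2 ≤ k) :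
    Nat.card {q : Quot (fun t t' : Tn (a + b + k) => DeRel (a + 1) (b + 1) t.1 t'.1) //
      classSize (a + 1) (b + 1) (a + b + k) q = tCde (a + 1) (b + 1) (a + b + k)} =
      (a + b).choose a := by
  obtain ⟨s, rfl⟩ := exists_size_eq k
  rw [tCde_succ_succ, ← ncard_stepWords, ← Nat.card_coe_set_eq]
  have hsize (w : stepWords a b) : (s.caterpillar w).size = a + b + s.size := by
    rw [size_caterpillar, length_of_mem_stepWords w.2]
  symm
  refine Nat.card_eq_of_bijective (fun w => ⟨Quot.mk _ (Tn.ofSize (s.caterpillar w) (hsize w)),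
    (classSize_mk _).trans (ncard_eqClass_caterpillar s w.2)⟩) ⟨fun w w' h => ?_, ?_⟩
  · exact Subtype.ext (DeRel.eq_of_caterpillar (by omega) w.2 w'.2
      (quot_mk_eq_iff.1 (congrArg Subtype.val h)))
  · rintro ⟨⟨t⟩, ht⟩
    obtain ⟨w, hw, s', hs', hts'⟩ := exists_eq_caterpillar_of_ncard_eqClass_eq hk t.size_eq
      ((classSize_mk t).symm.trans ht)
    refine ⟨⟨w, hw⟩, Subtype.ext (quot_mk_eq_iff.2 ?_)⟩
    exact hts' ▸ DeRel.caterpillar hw hs'.symm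

/-- for `d,e ≥ 1`: if `n < d + e` then `~C^{d,e}_n = 1`; if `n ≥ d + e` then
`~C^{d,e}_n = C_{n+2-d-e}` and the number of classes of this maximal cardinality is
`binom(d+e-2, d-1)`. -/
theorem stmt2 (d e n : ℕ) (hd : 1 ≤ d) (he : 1 ≤ e) :
    (n < d + e → tCde d e n = 1) ∧
    (d + e ≤ n → tCde d e n = catalan (n + 2 - d - e) ∧
      Nat.card {q : Quot (fun t t' : Tn n => DeRel d e t.1 t'.1) //
          classSize d e n q = tCde d e n} = (d + e - 2).choose (d - 1)) := by
  obtain ⟨a, rfl⟩ := Nat.exists_eq_add_of_le' hd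
  obtain ⟨b, rfl⟩ := Nat.exists_eq_add_of_le' he
  refine ⟨tCde_eq_one, fun hn => ?_⟩
  obtain ⟨k, rfl⟩ := Nat.exists_eq_add_of_le (show a + b ≤ n by omega)
  rw [show a + b + k + 2 - (a + 1) - (b + 1) = k by omega,
    show a + 1 + (b + 1) - 2 = a + b by omega, Nat.add_sub_cancel]
  exact ⟨tCde_succ_succ a b k, card_classSize_eq_tCde a b (by omega)⟩
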